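/- Let q > 1 be a real number. For integers n, m ≥ 0, the integral over x ∈ [−2, 2] of X_n(x)·X_m(x)·(q+1)/((q^{1/2}+q^{−1/2})² − x²)·√(4−x²)/(2π) with respect to Lebesgue measure equals: 1 if n = m = 0; (1 + q^{−1})·q^m if n = m ≥ 1; and 0 if n ≠ m. -/

import Mathlib

/-- `X n` is the Satake transform of the characteristic function `f_n` of the double coset
`GL₂(ℤ_p) diag(p^n,1) GL₂(ℤ_p)`, viewed as a function of `x = q^s + q^{-s} = 2 cos θ`:
`X 0 = 1` and, for `n ≥ 1`,
`X n (2 cos θ) = q^{n/2} (sin((n+1)θ) - q⁻¹ sin((n-1)θ)) / sin θ`,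
expressed via Chebyshev polynomials of the second kind. -/
noncomputable def satakeX (q : ℝ) (n : ℕ) (x : ℝ) : ℝ :=
  if n = 0 then 1
  else (Real.sqrt q) ^ n *
    ((Polynomial.Chebyshev.U ℝ (n : ℤ)).eval (x / 2) -
      q⁻¹ * (Polynomial.Chebyshev.U ℝ ((n : ℤ) - 2)).eval (x / 2))

/-!
Put `x = 2 Re z` with `z` on the unit circle and `t = q⁻¹`, `c = 1 - t z²`. The Weyl integration
formula turns `√(4 - x²) / (2π) dx` into `2 (Im z)²` times the Haar measure of the circle, the
remaining Plancherel density becomes `(1 + t) / |c|²`, and `X n (x) Im z` is a multiple of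
`Im (z ^ (n + 1) c̄)`. Since `2 Im a Im b = Re (a b̄) - Re (a b)` and `z² c̄ = z² - t`,
`2 Im (z ^ (n + 1) c̄) Im (z ^ (m + 1) c̄) / |c|²` equals
`Re (z ^ (n - m)) - Re (z ^ (n + m) (z² - t) / c)`. For `t < 1` the last fraction is holomorphic on
the closed unit disc, so the mean value property gives its average as its value at `0`, which
vanishes unless `n = m = 0`.
-/

open Metric Real
open scoped ComplexConjugate

theorem circleAverage_comp_re {E : Type*} [NormedAddCommGroup E] [NormedSpace ℝ E] (g : ℝ → E) :
    circleAverage (fun z ↦ g z.re) 0 1 = π⁻¹ • ∫ θ in 0..π, g (cos θ) := by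
  have hre (θ : ℝ) : (circleMap 0 1 θ).re = cos θ := by
    simp [circleMap, Complex.exp_ofReal_mul_I_re]
  have hsub : 2 * π - π = π := by ring
  have hdouble : ∫ θ in 0..2 * π, g (cos θ) = (2 : ℝ) • ∫ θ in 0..π, g (cos θ) := by
    by_cases hint : IntervalIntegrable (fun θ ↦ g (cos θ)) MeasureTheory.volume 0 π
    · have hint' : IntervalIntegrable (fun θ ↦ g (cos θ)) MeasureTheory.volume π (2 * π) := by
        simpa [cos_two_pi_sub, hsub] using (hint.comp_sub_left (2 * π)).symm
      have hreflect : ∫ θ in π..2 * π, g (cos θ) = ∫ θ in 0..π, g (cos θ) := by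
        simpa only [cos_two_pi_sub, hsub, sub_zero] using
          (intervalIntegral.integral_comp_sub_left (a := 0) (b := π)
            (fun θ ↦ g (cos θ)) (2 * π)).symm
      rw [← intervalIntegral.integral_add_adjacent_intervals hint hint', hreflect, two_smul]
    · -- On non-integrable functions the integral is `0` by convention, so the identity still holds.
      rw [intervalIntegral.integral_undef hint, intervalIntegral.integral_undef, smul_zero]
      refine fun h ↦ hint (h.mono_set (Set.uIcc_subset_uIcc_left ?_))
      rw [Set.uIcc_of_le (by positivity)]
      constructor <;> linarith [pi_pos]
  rw [circleAverage_def]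
  simp only [hre]
  rw [hdouble, smul_smul, mul_inv, mul_right_comm, inv_mul_cancel₀ two_ne_zero, one_mul]

theorem sq_re_add_sq_im_of_norm_eq_one {z : ℂ} (hz : ‖z‖ = 1) : z.re ^ 2 + z.im ^ 2 = 1 := by
  rw [sq, sq, ← Complex.normSq_apply, ← Complex.sq_norm, hz, one_pow]

theorem integral_mul_semicircle (g : ℝ → ℝ) :
    ∫ x in -2..2, g x * (√(4 - x ^ 2) / (2 * π)) =
      circleAverage (fun z ↦ g (2 * z.re) * (2 * z.im ^ 2)) 0 1 := by
  have hsqrt (y : ℝ) : √(4 - (2 * y) ^ 2) = 2 * ((1 - y ^ 2) * √(1 - y ^ 2)⁻¹) := by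
    rw [show 4 - (2 * y) ^ 2 = 2 ^ 2 * (1 - y ^ 2) by ring, sqrt_mul (by positivity),
      sqrt_sq zero_le_two, sqrt_inv, ← div_eq_mul_inv, div_sqrt]
  calc
    ∫ x in -2..2, g x * (√(4 - x ^ 2) / (2 * π))
      = 2 * ∫ y in -1..1, g (2 * y) * (√(4 - (2 * y) ^ 2) / (2 * π)) := by
        rw [intervalIntegral.mul_integral_comp_mul_left
          (f := fun x ↦ g x * (√(4 - x ^ 2) / (2 * π)))]
        norm_num
    _ = π⁻¹ * ∫ y in -1..1, g (2 * y) * (2 * (1 - y ^ 2)) * √(1 - y ^ 2)⁻¹ := by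
        simp only [hsqrt, ← intervalIntegral.integral_const_mul]
        congr with y
        field_simp
    _ = π⁻¹ * ∫ θ in 0..π, g (2 * cos θ) * (2 * (1 - cos θ ^ 2)) := by
        rw [← Polynomial.Chebyshev.integral_measureT,
          Polynomial.Chebyshev.integral_measureT_eq_integral_cos]
    _ = circleAverage (fun z ↦ g (2 * z.re) * (2 * (1 - z.re ^ 2))) 0 1 := by
        rw [circleAverage_comp_re fun y ↦ g (2 * y) * (2 * (1 - y ^ 2)), smul_eq_mul]
    _ = circleAverage (fun z ↦ g (2 * z.re) * (2 * z.im ^ 2)) 0 1 := by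
        refine circleAverage_congr_sphere fun z hz ↦ ?_
        rw [← sq_re_add_sq_im_of_norm_eq_one (z := z) (by simpa using hz), add_sub_cancel_left]

theorem circleAverage_re_of_differentiableOn {F : ℂ → ℂ} {c : ℂ} {R : ℝ}
    (hF : DifferentiableOn ℂ F (closedBall c |R|)) :
    circleAverage (fun z ↦ (F z).re) c R = (F c).re := by
  have hint : CircleIntegrable F c R :=
    (hF.continuousOn.mono sphere_subset_closedBall).circleIntegrable'
  have hmean : circleAverage F c R = F c :=
    (hF.mono closure_ball_subset_closedBall).diffContOnCl.circleAverage
  rw [← hmean]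
  exact Complex.reCLM.circleAverage_comp_comm hint

theorem circleAverage_re_pow_mul_conj_pow (n m : ℕ) :
    circleAverage (fun z ↦ (z ^ n * conj z ^ m).re) 0 1 = if n = m then 1 else 0 := by
  wlog hmn : m ≤ n generalizing n m
  · have hswap (z : ℂ) : (z ^ n * conj z ^ m).re = (z ^ m * conj z ^ n).re := by
      rw [← Complex.conj_re, map_mul, map_pow, map_pow, Complex.conj_conj, mul_comm]
    simp only [hswap, this m n (le_of_not_ge hmn), eq_comm]
  obtain ⟨k, rfl⟩ := Nat.exists_eq_add_of_le hmn
  calc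
    circleAverage (fun z ↦ (z ^ (m + k) * conj z ^ m).re) 0 1
      = circleAverage (fun z ↦ (z ^ k).re) 0 1 := circleAverage_congr_sphere fun z hz ↦ by
        have hzz : z * conj z = 1 := by simp [Complex.mul_conj', show ‖z‖ = 1 by simpa using hz]
        rw [pow_add, mul_right_comm, ← mul_pow, hzz, one_pow, one_mul]
    _ = ((0 : ℂ) ^ k).re := circleAverage_re_of_differentiableOn (by fun_prop)
    _ = if m + k = m then 1 else 0 := by simp [zero_pow_eq, apply_ite Complex.re]

theorem two_mul_im_mul_im (a b : ℂ) : 2 * (a.im * b.im) = (a * conj b).re - (a * b).re := by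
  simp only [Complex.mul_re, Complex.conj_re, Complex.conj_im]
  ring

theorem one_sub_mul_sq_ne_zero {t z : ℂ} (ht : ‖t‖ < 1) (hz : ‖z‖ ≤ 1) : 1 - t * z ^ 2 ≠ 0 := by
  refine sub_ne_zero.2 fun h ↦ ?_
  have hlt : ‖t * z ^ 2‖ < 1 := by
    rw [norm_mul, norm_pow]
    exact mul_lt_one_of_nonneg_of_lt_one_left (norm_nonneg t) ht (pow_le_one₀ (norm_nonneg z) hz)
  simp [← h] at hlt

/-- The function `Im (z ^ (n + 1) * conj (1 - t z ^ 2))` on the unit circle. For real `t` and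
`z = e^{iθ}` it equals `sin ((n + 1) θ) - t sin ((n - 1) θ)`, the antisymmetric numerator of the
rank-one Hall–Littlewood polynomial; division by `sin θ` gives `X n` up to normalization. -/
noncomputable def hallLittlewoodNum (t : ℂ) (n : ℕ) (z : ℂ) : ℝ :=
  (z ^ (n + 1) * conj (1 - t * z ^ 2)).im

/-- The Poincaré polynomial `∑ t ^ ℓ(w)` of the stabilizer of the weight `n` in the Weyl group
`{±1}` of `PGL(2)`: the full group for `n = 0` and trivial otherwise. It normalizes
`hallLittlewoodNum`. -/
noncomputable def stabilizerPoincare (t : ℝ) (n : ℕ) : ℝ := if n = 0 then 1 + t else 1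

theorem stabilizerPoincare_pos {t : ℝ} (ht : 0 ≤ t) (n : ℕ) : 0 < stabilizerPoincare t n := by
  unfold stabilizerPoincare
  split_ifs <;> positivity

theorem hallLittlewoodNum_mul_div_normSq {t z : ℂ} (hz : ‖z‖ = 1) (h : 1 - t * z ^ 2 ≠ 0)
    (n m : ℕ) :
    2 * (hallLittlewoodNum t n z * hallLittlewoodNum t m z) / Complex.normSq (1 - t * z ^ 2) =
      (z ^ n * conj z ^ m).re - (z ^ (n + m) * (z ^ 2 - conj t) / (1 - t * z ^ 2)).re := by
  have hzz : z * conj z = 1 := by simp [Complex.mul_conj', hz]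
  have hconj : z ^ 2 * conj (1 - t * z ^ 2) = z ^ 2 - conj t := by
    simp only [map_sub, map_mul, map_pow, map_one]
    linear_combination (-conj t) * (z * conj z + 1) * hzz
  have h' : conj (1 - t * z ^ 2) ≠ 0 := (map_ne_zero _).2 h
  rw [hallLittlewoodNum, hallLittlewoodNum, two_mul_im_mul_im, sub_div, ← Complex.div_ofReal_re,
    ← Complex.div_ofReal_re, ← Complex.mul_conj, ← hconj, map_mul, map_pow, Complex.conj_conj]
  set c := 1 - t * z ^ 2
  congr 2
  · rw [div_eq_iff (mul_ne_zero h h')]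
    linear_combination z ^ n * conj z ^ m * c * conj c * hzz
  · rw [div_eq_div_iff (mul_ne_zero h h') h]
    ring

theorem circleAverage_hallLittlewoodNum_mul {t : ℂ} (ht : ‖t‖ < 1) (n m : ℕ) :
    circleAverage (fun z ↦ 2 * (hallLittlewoodNum t n z * hallLittlewoodNum t m z) /
      Complex.normSq (1 - t * z ^ 2)) 0 1 = if n = m then stabilizerPoincare t.re n else 0 := by
  set F : ℂ → ℂ := fun z ↦ z ^ (n + m) * (z ^ 2 - conj t) / (1 - t * z ^ 2)
  have hFdiff : DifferentiableOn ℂ F (closedBall 0 |1|) :=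
    DifferentiableOn.div (by fun_prop) (by fun_prop) fun z hz ↦
      one_sub_mul_sq_ne_zero ht (by simpa using hz)
  have hFcont : ContinuousOn (fun z ↦ (F z).re) (sphere 0 |1|) :=
    Complex.continuous_re.comp_continuousOn (hFdiff.continuousOn.mono sphere_subset_closedBall)
  have hF0 : (F 0).re = if n = 0 ∧ m = 0 then -t.re else 0 := by
    simp [F, zero_pow_eq, apply_ite Complex.re, neg_ite]
  calc
    circleAverage (fun z ↦ 2 * (hallLittlewoodNum t n z * hallLittlewoodNum t m z) /
        Complex.normSq (1 - t * z ^ 2)) 0 1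
      = circleAverage (fun z ↦ (z ^ n * conj z ^ m).re - (F z).re) 0 1 :=
        circleAverage_congr_sphere fun z hz ↦
          have hz' : ‖z‖ = 1 := by simpa using hz
          hallLittlewoodNum_mul_div_normSq hz' (one_sub_mul_sq_ne_zero ht hz'.le) n m
    _ = (if n = m then 1 else 0) - if n = 0 ∧ m = 0 then -t.re else 0 := by
        rw [circleAverage_fun_sub (ContinuousOn.circleIntegrable' (by fun_prop))
          hFcont.circleIntegrable', circleAverage_re_pow_mul_conj_pow,
          circleAverage_re_of_differentiableOn hFdiff, hF0]
    _ = if n = m then stabilizerPoincare t.re n else 0 := by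
        rcases eq_or_ne n m with rfl | hnm
        · rcases eq_or_ne n 0 with rfl | hn
          · simp [stabilizerPoincare]
          · simp [stabilizerPoincare, hn]
        · simp [hnm, show ¬(n = 0 ∧ m = 0) by omega]

theorem eval_chebyshevU_re_mul_im {z : ℂ} (hz : ‖z‖ = 1) (k : ℤ) :
    (Polynomial.Chebyshev.U ℝ k).eval z.re * z.im = (z ^ (k + 1)).im := by
  obtain ⟨θ, rfl⟩ : ∃ θ : ℝ, Complex.exp (θ * Complex.I) = z := Complex.norm_eq_one_iff z |>.1 hz
  rw [Complex.exp_ofReal_mul_I_re, Complex.exp_ofReal_mul_I_im, Polynomial.Chebyshev.U_real_cos,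
    ← Complex.exp_int_mul, ← mul_assoc]
  exact_mod_cast (Complex.exp_ofReal_mul_I_im _).symm

theorem hallLittlewoodNum_ofReal (t : ℝ) (n : ℕ) {z : ℂ} (hz : ‖z‖ = 1) :
    hallLittlewoodNum t n z = (z ^ ((n : ℤ) + 1)).im - t * (z ^ ((n : ℤ) - 1)).im := by
  have hz0 : z ≠ 0 := norm_ne_zero_iff.1 (by simp [hz])
  have h : z ^ (n + 1) * conj (1 - t * z ^ 2) = z ^ ((n : ℤ) + 1) - t * z ^ ((n : ℤ) - 1) := by
    rw [map_sub, map_one, map_mul, map_pow, Complex.conj_ofReal, ← Complex.inv_eq_conj hz,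
      zpow_add₀ hz0, zpow_sub₀ hz0]
    simp only [zpow_natCast, zpow_one]
    field_simp
    ring
  rw [hallLittlewoodNum, h, Complex.sub_im, Complex.im_ofReal_mul]

theorem satakeX_two_mul_re_mul_im_mul_stabilizerPoincare (q : ℝ) (n : ℕ) {z : ℂ} (hz : ‖z‖ = 1) :
    satakeX q n (2 * z.re) * z.im * stabilizerPoincare q⁻¹ n =
      √q ^ n * hallLittlewoodNum (q⁻¹ : ℝ) n z := by
  rw [hallLittlewoodNum_ofReal _ _ hz]
  rcases eq_or_ne n 0 with rfl | hn
  · have hinv : (z ^ (((0 : ℕ) : ℤ) - 1)).im = -z.im := by simp [Complex.inv_eq_conj hz]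
    rw [hinv]
    simp only [satakeX, stabilizerPoincare, if_true, pow_zero, Nat.cast_zero, zero_add, zpow_one]
    ring
  · have h1 := eval_chebyshevU_re_mul_im hz n
    have h2 := eval_chebyshevU_re_mul_im hz (n - 2)
    rw [show (n : ℤ) - 2 + 1 = n - 1 by ring] at h2
    rw [← h1, ← h2, stabilizerPoincare, satakeX, if_neg hn, if_neg hn,
      mul_div_cancel_left₀ _ two_ne_zero]
    ring

theorem normSq_one_sub_mul_sq (t : ℝ) {z : ℂ} (hz : ‖z‖ = 1) :
    Complex.normSq (1 - t * z ^ 2) = (1 + t) ^ 2 - t * (2 * z.re) ^ 2 := by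
  have hre : (z ^ 2).re = 2 * z.re ^ 2 - 1 := by
    rw [sq, Complex.mul_re]
    linear_combination -sq_re_add_sq_im_of_norm_eq_one hz
  have hnormSq : Complex.normSq z = 1 := by rw [← Complex.sq_norm, hz, one_pow]
  rw [Complex.normSq_sub, map_one, map_mul, map_pow, Complex.normSq_ofReal, hnormSq, one_mul,
    Complex.conj_re, Complex.re_ofReal_mul, hre]
  ring

theorem plancherel_density_two_mul_re {q : ℝ} (hq : 0 < q) {z : ℂ} (hz : ‖z‖ = 1) :
    (q + 1) / ((√q + (√q)⁻¹) ^ 2 - (2 * z.re) ^ 2) =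
      (1 + q⁻¹) / Complex.normSq (1 - (q⁻¹ : ℝ) * z ^ 2) := by
  have hsq : (√q + (√q)⁻¹) ^ 2 = q * (1 + q⁻¹) ^ 2 := by
    have h := sq_sqrt hq.le
    field_simp
    rw [h]
    ring
  have hden : (√q + (√q)⁻¹) ^ 2 - (2 * z.re) ^ 2 =
      q * Complex.normSq (1 - (q⁻¹ : ℝ) * z ^ 2) := by
    rw [hsq, normSq_one_sub_mul_sq _ hz, mul_sub, mul_inv_cancel_left₀ hq.ne']
  rw [hden, show q + 1 = q * (1 + q⁻¹) by field_simp, mul_div_mul_left _ _ hq.ne']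

theorem plancherel_integrand_two_mul_re {q : ℝ} (hq : 0 < q) (n m : ℕ) {z : ℂ} (hz : ‖z‖ = 1) :
    satakeX q n (2 * z.re) * satakeX q m (2 * z.re) *
        ((q + 1) / ((√q + (√q)⁻¹) ^ 2 - (2 * z.re) ^ 2)) * (2 * z.im ^ 2) =
      √q ^ n * √q ^ m * (1 + q⁻¹) / (stabilizerPoincare q⁻¹ n * stabilizerPoincare q⁻¹ m) *
        (2 * (hallLittlewoodNum (q⁻¹ : ℝ) n z * hallLittlewoodNum (q⁻¹ : ℝ) m z) /
          Complex.normSq (1 - (q⁻¹ : ℝ) * z ^ 2)) := by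
  have hn := (stabilizerPoincare_pos (inv_pos.2 hq).le n).ne'
  have hm := (stabilizerPoincare_pos (inv_pos.2 hq).le m).ne'
  have hXn := eq_div_of_mul_eq hn (satakeX_two_mul_re_mul_im_mul_stabilizerPoincare q n hz)
  have hXm := eq_div_of_mul_eq hm (satakeX_two_mul_re_mul_im_mul_stabilizerPoincare q m hz)
  rw [plancherel_density_two_mul_re hq hz]
  calc
    _ = 2 * (satakeX q n (2 * z.re) * z.im) * (satakeX q m (2 * z.re) * z.im) *
        ((1 + q⁻¹) / Complex.normSq (1 - (q⁻¹ : ℝ) * z ^ 2)) := by ring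
    _ = _ := by
        rw [hXn, hXm]
        ring

/-- Plancherel formula (Lemma 5.1) evaluated on the Hecke algebra basis `{f_n}`:
the integral of `X_n · X_m` against the spherical Plancherel measure
`(q+1)/((q^{1/2}+q^{-1/2})² - x²) · √(4-x²)/(2π)` on `[-2,2]` equals `1` if `n = m = 0`,
`(1+q⁻¹)·q^m` if `n = m ≥ 1`, and `0` if `n ≠ m`. -/
theorem plancherel_hecke_basis (q : ℝ) (hq : 1 < q) (n m : ℕ) :
    ∫ x in (-2 : ℝ)..2,
        satakeX q n x * satakeX q m x *
          ((q + 1) / ((Real.sqrt q + (Real.sqrt q)⁻¹) ^ 2 - x ^ 2)) *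
          (Real.sqrt (4 - x ^ 2) / (2 * Real.pi)) =
      if n = m then (if n = 0 then 1 else (1 + q⁻¹) * q ^ n) else 0 := by
  have hq0 : 0 < q := one_pos.trans hq
  have ht : ‖((q⁻¹ : ℝ) : ℂ)‖ < 1 := by
    rw [Complex.norm_of_nonneg (inv_pos.2 hq0).le]
    exact inv_lt_one_of_one_lt₀ hq
  have hpoint := fun (z : ℂ) (hz : z ∈ sphere (0 : ℂ) |1|) ↦
    plancherel_integrand_two_mul_re hq0 n m (z := z) (by simpa using hz)
  rw [integral_mul_semicircle, circleAverage_congr_sphere hpoint]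
  simp only [← smul_eq_mul (√q ^ n * √q ^ m * _ / _)]
  rw [circleAverage_fun_smul, circleAverage_hallLittlewoodNum_mul ht, Complex.ofReal_re,
    smul_eq_mul]
  rcases eq_or_ne n m with rfl | hnm
  · have hone : 1 + q⁻¹ ≠ 0 := by positivity
    rw [if_pos rfl, if_pos rfl, ← mul_pow, mul_self_sqrt hq0.le, stabilizerPoincare]
    split_ifs with hn
    · rw [hn, pow_zero]
      field_simp [hone]
    · ring
  · simp [hnm]
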